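/- For integers 1 ≤ ℓ < d < n, the normalized covering number is non-decreasing in n: c^(ℓ)(n, d) ≤ c^(ℓ)(n+1, d), i.e. f^(ℓ)(n,d) · 2^(n+1-ℓ) · C(n+1,ℓ) ≤ f^(ℓ)(n+1,d) · 2^(n-ℓ) · C(n,ℓ). -/

import Mathlib

/-!
The proof averages over facets. The cube `Q_{n+1}` has `2(n+1)` facets, one for each pair `(i, b)`
of a coordinate and a value, and each of them is a copy of `Q_n`. If `S` is a `(d,ℓ)`-covering set
of `Q_{n+1}`, then its members lying in a given facet form a `(d,ℓ)`-covering set of that facet,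
since every subcube of a cube inside the facet lies in the facet (`isCover_facet`). So each facet
contains at least `f^(ℓ)(n,d)` members of `S`. On the other hand an `ℓ`-dimensional subcube lies in
exactly `n+1-ℓ` facets, one per fixed coordinate. Double counting yields
`2(n+1) f^(ℓ)(n,d) ≤ (n+1-ℓ) |S|` (`double_count`), and the claim follows from
`(n+1-ℓ) C(n+1,ℓ) = (n+1) C(n,ℓ)` on taking `S` of minimum size.
-/


/-- The dimension of a subcube of `Q_n`, represented as a function
`Fin n → Option Bool` (`none` = ∗): the number of ∗-coordinates. -/
def Subcube.dim {n : ℕ} (s : Fin n → Option Bool) : ℕ :=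
  (Finset.univ.filter (fun i => s i = none)).card

/-- `cubes n ℓ` is `H_n^ℓ`, the set of all `ℓ`-dimensional subcubes of `Q_n`. -/
def cubes (n ℓ : ℕ) : Finset (Fin n → Option Bool) :=
  Finset.univ.filter (fun s => Subcube.dim s = ℓ)

/-- `containedIn A B`: the subcube `A` is contained in the subcube `B`, i.e. every
∗-coordinate of `A` is a ∗-coordinate of `B` and they agree wherever both are non-∗
(equivalently every coordinate fixed in `B` is fixed to the same value in `A`). -/
def containedIn {n : ℕ} (A B : Fin n → Option Bool) : Prop :=
  ∀ i : Fin n, ∀ b : Bool, B i = some b → A i = some b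

instance {n : ℕ} (A B : Fin n → Option Bool) : Decidable (containedIn A B) := by
  unfold containedIn; infer_instance

/-- `IsCover n d ℓ S`: `S` is a `(d,ℓ)`-covering set of `Q_n`. -/
def IsCover (n d ℓ : ℕ) (S : Finset (Fin n → Option Bool)) : Prop :=
  S ⊆ cubes n ℓ ∧ ∀ B ∈ cubes n d, ∃ A ∈ S, containedIn A B

/-- `coverNum n d ℓ = f^(ℓ)(n,d)`, the minimum size of a `(d,ℓ)`-covering set of `Q_n`. -/
noncomputable def coverNum (n d ℓ : ℕ) : ℕ :=
  sInf {k | ∃ S : Finset (Fin n → Option Bool), IsCover n d ℓ S ∧ S.card = k}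

/-- `polyNum n d ℓ = pc^(ℓ)(n,d)`, the largest number `m` of colors admitting a
`d,ℓ`-polychromatic coloring of `H_n^ℓ`. -/
noncomputable def polyNum (n d ℓ : ℕ) : ℕ :=
  sSup {m | ∃ χ : (Fin n → Option Bool) → Fin m,
    ∀ B ∈ cubes n d, ∀ c : Fin m, ∃ A ∈ cubes n ℓ, containedIn A B ∧ χ A = c}

theorem mem_cubes {n ℓ : ℕ} {s : Fin n → Option Bool} : s ∈ cubes n ℓ ↔ Subcube.dim s = ℓ := by
  simp [cubes]

theorem dim_eq_removeNth {n : ℕ} (i : Fin (n + 1)) (s : Fin (n + 1) → Option Bool) :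
    Subcube.dim s = (if s i = none then 1 else 0) + Subcube.dim (i.removeNth s) := by
  simp only [Subcube.dim, Finset.card_filter]
  rw [Fin.sum_univ_succAbove _ i]
  rfl

/-- All `ℓ`-dimensional subcubes together form a covering set. This is what makes the infimum
defining `coverNum` an attained minimum rather than the junk value `0`. -/
theorem isCover_cubes (n d ℓ : ℕ) (h : ℓ ≤ d) : IsCover n d ℓ (cubes n ℓ) := by
  refine ⟨subset_rfl, fun B hB => ?_⟩
  rw [mem_cubes, Subcube.dim] at hB
  obtain ⟨T, hT, hcard⟩ := Finset.exists_subset_card_eq (hB.symm ▸ h)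
  refine ⟨fun i => if i ∈ T then none else some ((B i).getD false), ?_, ?_⟩
  · simp [mem_cubes, Subcube.dim, hcard]
  · intro i b hb
    have hi : i ∉ T := fun hi => by simpa [hb] using hT hi
    simp [hi, hb]

theorem coverNum_le {n d ℓ : ℕ} {S : Finset (Fin n → Option Bool)} (h : IsCover n d ℓ S) :
    coverNum n d ℓ ≤ S.card :=
  Nat.sInf_le ⟨S, h, rfl⟩

theorem exists_cover_card_eq (n d ℓ : ℕ) (h : ℓ ≤ d) :
    ∃ S, IsCover n d ℓ S ∧ S.card = coverNum n d ℓ :=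
  Nat.sInf_mem (s := {k | ∃ S : Finset (Fin n → Option Bool), IsCover n d ℓ S ∧ S.card = k})
    ⟨_, _, isCover_cubes n d ℓ h, rfl⟩

/-- The members of a covering set of `Q_{n+1}` lying in the facet `x i = b` form, after deleting
the coordinate `i`, a covering set of `Q_n`. -/
theorem isCover_facet {n d ℓ : ℕ} {S : Finset (Fin (n + 1) → Option Bool)}
    (h : IsCover (n + 1) d ℓ S) (i : Fin (n + 1)) (b : Bool) :
    IsCover n d ℓ ((S.filter (fun A => A i = some b)).image (fun A => i.removeNth A)) := by
  constructor
  · intro A' hA'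
    obtain ⟨A, hA, rfl⟩ := Finset.mem_image.1 hA'
    obtain ⟨hAS, hAi⟩ := Finset.mem_filter.1 hA
    have hdim := h.1 hAS
    rw [mem_cubes] at hdim ⊢
    rw [dim_eq_removeNth i, hAi] at hdim
    simpa using hdim
  · intro B hB
    have hB' : i.insertNth (α := fun _ => Option Bool) (some b) B ∈ cubes (n + 1) d := by
      rw [mem_cubes] at hB ⊢
      rw [dim_eq_removeNth i]
      simpa using hB
    obtain ⟨A, hAS, hAB⟩ := h.2 _ hB'
    refine ⟨i.removeNth A, Finset.mem_image.2 ⟨A, Finset.mem_filter.2 ⟨hAS, ?_⟩, rfl⟩, ?_⟩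
    · exact hAB i b (by simp)
    · intro j c hj
      exact hAB (i.succAbove j) c (by simpa using hj)

/-- A subcube of `Q_m` lies in one facet per fixed coordinate, so in `m - dim` facets; the pair
`p = (i, b)` stands for the facet `x i = b`. -/
theorem sum_facets {m : ℕ} (A : Fin m → Option Bool) :
    ∑ p : Fin m × Bool, (if A p.1 = some p.2 then 1 else 0) = m - Subcube.dim A := by
  have hfix : ∀ i, (∑ b : Bool, if A i = some b then 1 else 0) = if A i ≠ none then 1 else 0 := by
    intro i
    rcases A i with _ | _ | _ <;> simp
  have hcompl := Finset.card_filter_add_card_filter_not (s := (Finset.univ : Finset (Fin m)))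
    (fun i => A i = none)
  rw [Finset.card_univ, Fintype.card_fin] at hcompl
  rw [Fintype.sum_prod_type, Finset.sum_congr rfl (fun i _ => hfix i), ← Finset.card_filter,
    Subcube.dim]
  simp only [ne_eq]
  omega

theorem double_count {n d ℓ : ℕ} {S : Finset (Fin (n + 1) → Option Bool)}
    (h : IsCover (n + 1) d ℓ S) :
    2 * (n + 1) * coverNum n d ℓ ≤ (n + 1 - ℓ) * S.card := by
  calc 2 * (n + 1) * coverNum n d ℓ
      = ∑ _p : Fin (n + 1) × Bool, coverNum n d ℓ := by simp [mul_comm]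
    _ ≤ ∑ p : Fin (n + 1) × Bool, (S.filter (fun A => A p.1 = some p.2)).card :=
        Finset.sum_le_sum fun p _ =>
          (coverNum_le (isCover_facet h p.1 p.2)).trans Finset.card_image_le
    _ = ∑ A ∈ S, ∑ p : Fin (n + 1) × Bool, (if A p.1 = some p.2 then 1 else 0) := by
        simp only [Finset.card_filter]
        exact Finset.sum_comm
    _ = ∑ _A ∈ S, (n + 1 - ℓ) := Finset.sum_congr rfl fun A hA => by
        rw [sum_facets, mem_cubes.1 (h.1 hA)]
    _ = (n + 1 - ℓ) * S.card := by simp [mul_comm]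

/-- the normalized covering number `c^(ℓ)(n,d)` is non-decreasing in `n`:
`f^(ℓ)(n,d) · 2^(n+1-ℓ) · C(n+1,ℓ) ≤ f^(ℓ)(n+1,d) · 2^(n-ℓ) · C(n,ℓ)`. -/
theorem coverRatio_monotone (n d ℓ : ℕ) (hℓ : 1 ≤ ℓ) (hℓd : ℓ < d) (hdn : d < n) :
    coverNum n d ℓ * (2 ^ (n + 1 - ℓ) * (n + 1).choose ℓ) ≤
      coverNum (n + 1) d ℓ * (2 ^ (n - ℓ) * n.choose ℓ) := by
  obtain ⟨S, hS, hcard⟩ := exists_cover_card_eq (n + 1) d ℓ hℓd.le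
  have hcount := double_count hS
  rw [hcard] at hcount
  have hchoose : (n + 1) * n.choose ℓ = (n + 1).choose ℓ * (n + 1 - ℓ) := by
    rw [mul_comm]
    exact Nat.choose_mul_succ_eq n ℓ
  have hpow : 2 ^ (n + 1 - ℓ) = 2 * 2 ^ (n - ℓ) := by
    rw [Nat.succ_sub (by omega), pow_succ, mul_comm]
  refine Nat.le_of_mul_le_mul_left (c := n + 1 - ℓ) ?_ (by omega)
  calc (n + 1 - ℓ) * (coverNum n d ℓ * (2 ^ (n + 1 - ℓ) * (n + 1).choose ℓ))
      = coverNum n d ℓ * (2 * 2 ^ (n - ℓ)) * ((n + 1).choose ℓ * (n + 1 - ℓ)) := by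
        rw [hpow]; ring
    _ = 2 * (n + 1) * coverNum n d ℓ * (2 ^ (n - ℓ) * n.choose ℓ) := by
        rw [← hchoose]; ring
    _ ≤ (n + 1 - ℓ) * coverNum (n + 1) d ℓ * (2 ^ (n - ℓ) * n.choose ℓ) :=
        Nat.mul_le_mul_right _ hcount
    _ = (n + 1 - ℓ) * (coverNum (n + 1) d ℓ * (2 ^ (n - ℓ) * n.choose ℓ)) := by ring
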